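/- Every computably approximable real has a two-sided computable approximation: if a real α ∈ (0,1) has a computable approximation, then it has a computable approximation {a_s} with a_s < α for infinitely many s and a_s > α for infinitely many s. -/

import Mathlib

open Filter

/-- A computable approximation of a real `α`: a computable sequence of
rationals in `[0,1]` converging to `α`. -/
def IsCompApprox (a : ℕ → ℚ) (α : ℝ) : Prop :=
  Computable a ∧ (∀ s, a s ∈ Set.Icc (0 : ℚ) 1) ∧
    Tendsto (fun s => (a s : ℝ)) atTop (nhds α)

/-- A d.c.e. approximation: a computable approximation with bounded variation. -/
def IsDCEApprox (a : ℕ → ℚ) (α : ℝ) : Prop :=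
  IsCompApprox a α ∧ Summable (fun s => |(a (s + 1) : ℝ) - (a s : ℝ)|)

/-- A computable order: a nondecreasing unbounded computable function. -/
def IsComputableOrder (f : ℕ → ℕ) : Prop :=
  Computable f ∧ Monotone f ∧ Tendsto f atTop atTop

/-- The liminf (in the extended reals) of `|(α - a (f s)) / (α - a s)|`. -/
noncomputable def speedLiminf (a : ℕ → ℚ) (f : ℕ → ℕ) (α : ℝ) : EReal :=
  Filter.liminf (fun s => ((|(α - (a (f s) : ℝ)) / (α - (a s : ℝ))| : ℝ) : EReal)) atTop

/-- A computable approximation `a` of `α` is `ρ`-speedable. -/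
def IsRhoSpeedable (a : ℕ → ℚ) (α : ℝ) (ρ : ℚ) : Prop :=
  (∃ q : ℚ, α = (q : ℝ)) ∨
    ∃ f, IsComputableOrder f ∧ speedLiminf a f α ≤ (((ρ : ℝ) : EReal))

/-- A computable approximation is speedable if it is `ρ`-speedable for some rational
`ρ ∈ [0,1)`. -/
def IsSpeedable (a : ℕ → ℚ) (α : ℝ) : Prop :=
  ∃ ρ : ℚ, 0 ≤ ρ ∧ ρ < 1 ∧ IsRhoSpeedable a α ρ

/-- A Solovay test: computable sequences of rationals `l i ≤ r i` in `[0,1]`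
with `Σ (r i - l i) < ∞`. -/
structure SolovayTest where
  l : ℕ → ℚ
  r : ℕ → ℚ
  comp_l : Computable l
  comp_r : Computable r
  mem_l : ∀ i, l i ∈ Set.Icc (0 : ℚ) 1
  mem_r : ∀ i, r i ∈ Set.Icc (0 : ℚ) 1
  le : ∀ i, l i ≤ r i
  summable : Summable (fun i => (r i : ℝ) - (l i : ℝ))

/-- A real `γ` is covered by a Solovay test if `γ ∈ [l i, r i]` for infinitely many `i`. -/
def SolovayTest.Covers (T : SolovayTest) (γ : ℝ) : Prop :=
  ∃ᶠ i in atTop, γ ∈ Set.Icc (T.l i : ℝ) (T.r i : ℝ)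

/-- The sequence of endpoints `l 0, r 0, l 1, r 1, …` of a Solovay test. -/
def SolovayTest.endpoints (T : SolovayTest) (n : ℕ) : ℚ :=
  if n % 2 = 0 then T.l (n / 2) else T.r (n / 2)

/-!
Given an approximation `a` of `α`, let `S` be the set of rationals `q ∈ [0, 1]` such that
`|a t - q| < 2 / q.den` for some `t ≥ q.den`. Only finitely many rationals in `[0, 1]` have
denominators below a given bound, so every injective enumeration of `S` converges to `α`. For each
`n`, the fractions with denominator `n` next to `α` on either side belong to `S`, so `S` has
infinitely many elements below `α` and infinitely many above it. Since `S` is recursively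
enumerable, it has a computable enumeration without repetitions, and this enumeration is a two-sided
approximation of `α`.
-/

theorem primrec₂_nat_gcd : Primrec₂ Nat.gcd := by
  have dvd_fst : PrimrecRel fun (z : ℕ × ℕ) (d : ℕ) => z.1 % d = 0 :=
    Primrec.eq.comp (Primrec.nat_mod.comp (Primrec.fst.comp .fst) .snd) (.const 0)
  have dvd_snd : PrimrecRel fun (z : ℕ × ℕ) (d : ℕ) => z.2 % d = 0 :=
    Primrec.eq.comp (Primrec.nat_mod.comp (Primrec.snd.comp .fst) .snd) (.const 0)
  have dvd_both : PrimrecRel fun (z : ℕ × ℕ) (d : ℕ) => z.1 % d = 0 ∧ z.2 % d = 0 :=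
    PrimrecPred.and dvd_fst dvd_snd
  refine (Primrec.nat_findGreatest (Primrec.nat_add.comp .fst .snd) dvd_both).of_eq ?_
  rintro ⟨m, n⟩
  simp only [← Nat.dvd_iff_mod_eq_zero]
  rw [Nat.findGreatest_eq_iff]
  refine ⟨?_, fun _ => ⟨Nat.gcd_dvd_left m n, Nat.gcd_dvd_right m n⟩, fun d hd hle h => ?_⟩
  · rcases m.eq_zero_or_pos with rfl | hm
    · simp
    · exact (Nat.gcd_le_left n hm).trans (Nat.le_add_right m n)
  · exact hd.not_ge (Nat.le_of_dvd (Nat.gcd_pos_iff.2 (by lia)) (Nat.dvd_gcd h.1 h.2))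

theorem encode_int_natCast (n : ℕ) : Encodable.encode (n : ℤ) = 2 * n :=
  rfl

theorem encode_int_negSucc (n : ℕ) : Encodable.encode (Int.negSucc n) = 2 * n + 1 :=
  rfl

theorem primrec_int_natAbs : Primrec Int.natAbs := by
  refine (Primrec.nat_div.comp (Primrec.succ.comp .encode) (.const 2)).of_eq fun z => ?_
  rcases z with n | n
  · rw [Int.ofNat_eq_natCast, encode_int_natCast, Int.natAbs_natCast]
    lia
  · rw [encode_int_negSucc, Int.natAbs_negSucc]
    lia

theorem primrecPred_int_nonneg : PrimrecPred fun z : ℤ => 0 ≤ z := by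
  refine (Primrec.eq.comp (Primrec.nat_mod.comp .encode (.const 2)) (.const 0)).of_eq fun z => ?_
  rcases z with n | n
  · rw [Int.ofNat_eq_natCast, encode_int_natCast]
    lia
  · rw [encode_int_negSucc]
    lia

theorem computablePred_and {α : Type*} [Primcodable α] {p q : α → Prop} (hp : ComputablePred p)
    (hq : ComputablePred q) : ComputablePred fun a => p a ∧ q a := by
  classical
  exact ((Primrec.and.to_comp.comp hp.decide hq.decide).of_eq fun a =>
    (Bool.decide_and (p a) (q a)).symm).computablePred

theorem computablePred_comp {α β : Type*} [Primcodable α] [Primcodable β] {p : β → Prop}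
    {f : α → β} (hp : ComputablePred p) (hf : Computable f) :
    ComputablePred fun a => p (f a) := by
  classical
  exact (hp.decide.comp hf).computablePred

theorem computable_nat_count {p : ℕ → Prop} [DecidablePred p] (hp : ComputablePred p) :
    Computable (Nat.count p) := by
  refine (Computable.nat_rec (h := fun _ z => z.2 + bif p z.1 then 1 else 0)
    Computable.id (.const 0) ?_).of_eq fun n => ?_
  · exact Primrec.nat_add.to_comp.comp (Computable.snd.comp .snd)
      (.cond (hp.decide.comp (Computable.fst.comp .snd)) (.const 1) (.const 0))
  · induction n with
    | zero => rfl
    | succ n ih =>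
      simp only [id] at ih ⊢
      rw [Nat.count_succ, ih, Bool.cond_decide]

theorem computable_nat_nth {p : ℕ → Prop} (hp : ComputablePred p)
    (hinf : {n | p n}.Infinite) : Computable (Nat.nth p) := by
  classical
  have hex (n : ℕ) : ∃ m, p m ∧ Nat.count p m = n :=
    ⟨Nat.nth p n, Nat.nth_mem_of_infinite hinf n, Nat.count_nth_of_infinite hinf n⟩
  have hsearch : ComputablePred fun z : ℕ × ℕ => p z.2 ∧ Nat.count p z.2 = z.1 :=
    computablePred_and (computablePred_comp hp .snd)
      (computablePred_comp Primrec.eq.computablePred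
        (((computable_nat_count hp).comp .snd).pair .fst))
  refine (Computable.find hsearch hex).of_eq fun n => ?_
  obtain ⟨hmem, hcount⟩ := Nat.find_spec (hex n)
  rw [← Nat.nth_count hmem, hcount]

theorem rePred_exists_nat {α : Type*} [Primcodable α] {R : α → ℕ → Prop}
    (hR : ComputablePred fun z : α × ℕ => R z.1 z.2) : REPred fun a => ∃ n, R a n := by
  classical
  refine (Partrec.rfind hR.decide.to₂.partrec₂).dom_re.of_eq fun a => ?_
  simp [Nat.rfind_dom]

-- `Denumerable.ofEncodableOfInfinite`, which supplies the `Primcodable` instance of `ℚ`, codes an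
-- element by the rank of its original code among all original codes.
theorem encode_ofNat_ofEncodableOfInfinite (α : Type*) [i : Encodable α] [Infinite α] (n : ℕ) :
    i.encode (@Denumerable.ofNat α (.ofEncodableOfInfinite α) n) =
      Nat.nth (· ∈ Set.range i.encode) n := by
  let := Encodable.decidableRangeEncode α
  have hinf : (Set.range i.encode).Infinite :=
    Set.infinite_range_of_injective Encodable.encode_injective
  have : Infinite (Set.range i.encode) := hinf.to_subtype
  calc
    _ = ((Nat.Subtype.ofNat (Set.range i.encode) n : Set.range i.encode) : ℕ) :=
      congrArg Subtype.val ((Encodable.equivRangeEncode α).apply_symm_apply _)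
    _ = Nat.nth (· ∈ Set.range i.encode) n := by
      rw [Nat.nth_apply_eq_orderIsoOfNat (p := (· ∈ Set.range i.encode)) hinf]
      exact congrArg Subtype.val Nat.Subtype.orderIsoOfNat_apply.symm

theorem computable_encode_ofEncodableOfInfinite (α : Type*) [i : Encodable α] [Infinite α]
    (h : ComputablePred (· ∈ Set.range i.encode)) :
    @Computable α ℕ (@Primcodable.ofDenumerable α (.ofEncodableOfInfinite α)) _ i.encode := by
  let := Denumerable.ofEncodableOfInfinite α
  have hinf : (Set.range i.encode).Infinite :=
    Set.infinite_range_of_injective Encodable.encode_injective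
  refine ((computable_nat_nth h hinf).comp Computable.encode).of_eq fun a => ?_
  rw [← encode_ofNat_ofEncodableOfInfinite, Denumerable.ofNat_encode]

theorem encode_rat_eq (q : ℚ) :
    @Encodable.encode ℚ Rat.instEncodable q = Nat.pair (Encodable.encode q.num) q.den :=
  rfl

theorem mem_range_encode_rat_iff (n : ℕ) :
    n ∈ Set.range (@Encodable.encode ℚ Rat.instEncodable) ↔
      0 < n.unpair.2 ∧ (Denumerable.ofNat ℤ n.unpair.1).natAbs.Coprime n.unpair.2 := by
  constructor
  · rintro ⟨q, rfl⟩
    rw [encode_rat_eq, Nat.unpair_pair, Denumerable.ofNat_encode]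
    exact ⟨q.pos, q.reduced⟩
  · rintro ⟨hpos, hcop⟩
    refine ⟨⟨_, _, hpos.ne', hcop⟩, ?_⟩
    rw [encode_rat_eq, Denumerable.encode_ofNat, Nat.pair_unpair]

theorem computable_encode_rat : Computable (@Encodable.encode ℚ Rat.instEncodable) := by
  have fst : Primrec fun n : ℕ => n.unpair.1 := Primrec.fst.comp .unpair
  have snd : Primrec fun n : ℕ => n.unpair.2 := Primrec.snd.comp .unpair
  have hgcd : Primrec fun n : ℕ => (Denumerable.ofNat ℤ n.unpair.1).natAbs.gcd n.unpair.2 :=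
    primrec₂_nat_gcd.comp (primrec_int_natAbs.comp ((Primrec.ofNat ℤ).comp fst)) snd
  have hrange := (PrimrecPred.and (Primrec.nat_lt.comp (.const 0) snd)
    (Primrec.eq.comp hgcd (.const 1))).of_eq fun n => (mem_range_encode_rat_iff n).symm
  exact computable_encode_ofEncodableOfInfinite ℚ (i := Rat.instEncodable) hrange.computablePred

theorem computable_rat_num : Computable Rat.num :=
  ((Primrec.ofNat ℤ).comp (Primrec.fst.comp .unpair)).to_comp.comp computable_encode_rat |>.of_eq
    fun q => by rw [encode_rat_eq, Nat.unpair_pair, Denumerable.ofNat_encode]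

theorem computable_rat_den : Computable Rat.den :=
  (Primrec.snd.comp .unpair).to_comp.comp computable_encode_rat |>.of_eq
    fun q => by rw [encode_rat_eq, Nat.unpair_pair]

open Nat.Partrec (Code) in
theorem exists_computablePred_unique_stage_of_rePred {α : Type*} [Primcodable α] {p : α → Prop}
    (hp : REPred p) :
    ∃ R : α → ℕ → Prop, (ComputablePred fun z : α × ℕ => R z.1 z.2) ∧
      (∀ a, p a ↔ ∃ s, R a s) ∧ ∀ a s t, R a s → R a t → s = t := by
  obtain ⟨c, hc⟩ := Code.exists_code.1 hp
  have halts_iff (a : α) : p a ↔ ∃ s, (c.evaln s (Encodable.encode a)).isSome := by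
    have hdom : (c.eval (Encodable.encode a)).Dom ↔ p a := by
      simp [hc, Part.assert]
    simp only [← hdom, Part.dom_iff_mem, Code.evaln_complete, Option.mem_def,
      Option.isSome_iff_exists]
    exact exists_comm
  have halts_mono (a : α) {s t : ℕ} (hst : s ≤ t) (hs : (c.evaln s (Encodable.encode a)).isSome) :
      (c.evaln t (Encodable.encode a)).isSome := by
    obtain ⟨x, hx⟩ := Option.isSome_iff_exists.1 hs
    exact Option.isSome_iff_exists.2 ⟨x, Code.evaln_mono hst hx⟩
  have halts_primrec {g : α × ℕ → ℕ} (hg : Primrec g) :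
      PrimrecPred fun z : α × ℕ => (c.evaln (g z) (Encodable.encode z.1)).isSome :=
    Primrec.eq.comp (Primrec.option_isSome.comp (Code.primrec_evaln.comp
      ((hg.pair (.const c)).pair (Primrec.encode.comp .fst)))) (.const true)
  refine ⟨fun a s => ¬(c.evaln s (Encodable.encode a)).isSome ∧
    (c.evaln (s + 1) (Encodable.encode a)).isSome, ?_, fun a => ?_, fun a s t hs ht => ?_⟩
  · exact (PrimrecPred.and (halts_primrec .snd).not
      (halts_primrec (Primrec.succ.comp .snd))).computablePred
  · rw [halts_iff]
    refine ⟨fun h => ?_, fun ⟨s, _, hs⟩ => ⟨s + 1, hs⟩⟩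
    exact Nat.exists_not_and_succ_of_not_zero_of_exists (by simp [Code.evaln]) h
  · by_contra hne
    rcases Nat.lt_or_gt_of_ne hne with hlt | hlt
    · exact ht.1 (halts_mono a hlt hs.2)
    · exact hs.1 (halts_mono a hlt ht.2)

theorem exists_computable_injective_range_of_computablePred {α : Type*} [Denumerable α]
    {p : α → Prop} (hp : ComputablePred p) (hinf : {a | p a}.Infinite) :
    ∃ f : ℕ → α, Computable f ∧ Function.Injective f ∧ Set.range f = {a | p a} := by
  have hcode : ComputablePred fun n => p (Denumerable.ofNat α n) :=
    computablePred_comp hp (Computable.ofNat α)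
  have hcode_inf : {n | p (Denumerable.ofNat α n)}.Infinite :=
    hinf.preimage fun a _ => ⟨Encodable.encode a, Denumerable.ofNat_encode a⟩
  refine ⟨fun n => Denumerable.ofNat α (Nat.nth (fun n => p (Denumerable.ofNat α n)) n),
    (Computable.ofNat α).comp (computable_nat_nth hcode hcode_inf),
    (Denumerable.eqv α).symm.injective.comp (Nat.nth_injective hcode_inf), ?_⟩
  rw [Set.range_comp', Nat.range_nth_of_infinite hcode_inf]
  exact Set.image_preimage_eq _ (Denumerable.eqv α).symm.surjective

theorem exists_computable_injective_range {α : Type*} [Denumerable α] {p : α → Prop}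
    (hp : REPred p) (hinf : {a | p a}.Infinite) :
    ∃ f : ℕ → α, Computable f ∧ Function.Injective f ∧ Set.range f = {a | p a} := by
  obtain ⟨R, hR, hpR, huniq⟩ := exists_computablePred_unique_stage_of_rePred hp
  have himage : Prod.fst '' {z : α × ℕ | R z.1 z.2} = {a | p a} := by
    ext a
    simp [hpR]
  obtain ⟨f, hf, hinj, hrange⟩ :=
    exists_computable_injective_range_of_computablePred hR (Set.Infinite.of_image _ (himage ▸ hinf))
  have hmem (n : ℕ) : R (f n).1 (f n).2 := hrange.subset ⟨n, rfl⟩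
  -- An element determines its stage, so forgetting the stage preserves injectivity.
  refine ⟨fun n => (f n).1, Computable.fst.comp hf, fun m n hmn => hinj ?_, ?_⟩
  · have hfst : (f m).1 = (f n).1 := hmn
    refine Prod.ext hfst (huniq _ _ _ (hmem m) ?_)
    rw [hfst]
    exact hmem n
  · rw [Set.range_comp', hrange, himage]

theorem finite_setOf_rat_mem_Icc_den_le (x y : ℚ) (D : ℕ) :
    {q : ℚ | q ∈ Set.Icc x y ∧ q.den ≤ D}.Finite := by
  have hfin : (⋃ d ∈ Set.Iic D, (fun k : ℤ => (k / d : ℚ)) '' Set.Icc ⌈x * d⌉ ⌊y * d⌋).Finite :=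
    (Set.finite_Iic D).biUnion fun d _ => (Set.finite_Icc _ _).image _
  refine hfin.subset fun q ⟨⟨hx, hy⟩, hD⟩ => ?_
  refine Set.mem_biUnion hD ⟨q.num, ⟨?_, ?_⟩, q.num_div_den⟩
  · rw [Int.ceil_le, ← Rat.mul_den_eq_num]
    gcongr
  · rw [Int.le_floor, ← Rat.mul_den_eq_num]
    gcongr

/-- The rational `q ∈ [0, 1]` lies near a late term of `a` on the scale of its own denominator. The
constant `2` leaves room for both neighbors of `lim a` in the grid `(1 / n) ℤ`, which are within
`1 / n` of the limit but not of the terms of `a`. Asking for `q.den ≤ t` makes members with large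
denominators close to the limit. -/
def IsGridNeighbor (a : ℕ → ℚ) (q : ℚ) : Prop :=
  q ∈ Set.Icc 0 1 ∧ ∃ t, q.den ≤ t ∧ |a t - q| < 2 / q.den

theorem abs_sub_lt_two_div_den_iff {x q : ℚ} (hx : 0 ≤ x) (hq : 0 ≤ q) :
    |x - q| < 2 / q.den ↔
      x.num.natAbs * q.den < (q.num.natAbs + 2) * x.den ∧
        q.num.natAbs * x.den < x.num.natAbs * q.den + 2 * x.den := by
  have hxd : (0 : ℚ) < x.den := mod_cast x.pos
  have hqd : (0 : ℚ) < q.den := mod_cast q.pos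
  have hxm : x * x.den = x.num.natAbs := by
    rw [x.mul_den_eq_num, Nat.cast_natAbs, abs_of_nonneg (Rat.num_nonneg.2 hx)]
  have hqm : q * q.den = q.num.natAbs := by
    rw [q.mul_den_eq_num, Nat.cast_natAbs, abs_of_nonneg (Rat.num_nonneg.2 hq)]
  have hscale : |x - q| < 2 / q.den ↔
      |(x.num.natAbs * q.den - q.num.natAbs * x.den : ℚ)| < 2 * x.den := by
    rw [← hxm, ← hqm, lt_div_iff₀ hqd, ← mul_lt_mul_iff_of_pos_right hxd, mul_assoc,
      ← abs_of_pos (mul_pos hqd hxd), ← abs_mul]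
    ring_nf
  rw [hscale, abs_sub_lt_iff, sub_lt_iff_lt_add, sub_lt_iff_lt_add, ← add_mul,
    add_comm (2 : ℚ), add_comm (2 * (x.den : ℚ))]
  norm_cast

section Approx
variable {a : ℕ → ℚ} {α : ℝ}

theorem isGridNeighbor_iff_exists_nat (hnonneg : ∀ s, 0 ≤ a s) (q : ℚ) :
    IsGridNeighbor a q ↔ ∃ t, 0 ≤ q.num ∧ q.num.natAbs ≤ q.den ∧ q.den ≤ t ∧
      (a t).num.natAbs * q.den < (q.num.natAbs + 2) * (a t).den ∧
        q.num.natAbs * (a t).den < (a t).num.natAbs * q.den + 2 * (a t).den := by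
  have hle_one (hq : 0 ≤ q.num) : q ≤ 1 ↔ q.num.natAbs ≤ q.den := by
    rw [← Rat.num_le_denom_iff]
    lia
  simp only [IsGridNeighbor, Set.mem_Icc, ← Rat.num_nonneg (q := q)]
  constructor
  · rintro ⟨⟨h0, h1⟩, t, ht, hlt⟩
    exact ⟨t, h0, (hle_one h0).1 h1, ht,
      (abs_sub_lt_two_div_den_iff (hnonneg t) (Rat.num_nonneg.1 h0)).1 hlt⟩
  · rintro ⟨t, h0, h1, ht, hlt⟩
    exact ⟨⟨h0, (hle_one h0).2 h1⟩, t, ht,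
      (abs_sub_lt_two_div_den_iff (hnonneg t) (Rat.num_nonneg.1 h0)).2 hlt⟩

theorem rePred_isGridNeighbor (ha : Computable a) (hnonneg : ∀ s, 0 ≤ a s) :
    REPred (IsGridNeighbor a) := by
  refine (rePred_exists_nat ?_).of_eq fun q => (isGridNeighbor_iff_exists_nat hnonneg q).symm
  have le_pred {f g : ℚ × ℕ → ℕ} (hf : Computable f) (hg : Computable g) :
      ComputablePred fun z => f z ≤ g z :=
    computablePred_comp Primrec.nat_le.computablePred (hf.pair hg)
  have lt_pred {f g : ℚ × ℕ → ℕ} (hf : Computable f) (hg : Computable g) :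
      ComputablePred fun z => f z < g z :=
    computablePred_comp Primrec.nat_lt.computablePred (hf.pair hg)
  have mul {f g : ℚ × ℕ → ℕ} (hf : Computable f) (hg : Computable g) :
      Computable fun z => f z * g z := Primrec.nat_mul.to_comp.comp hf hg
  have add {f g : ℚ × ℕ → ℕ} (hf : Computable f) (hg : Computable g) :
      Computable fun z => f z + g z := Primrec.nat_add.to_comp.comp hf hg
  have q_num : Computable fun z : ℚ × ℕ => z.1.num := computable_rat_num.comp .fst
  have q_natAbs := primrec_int_natAbs.to_comp.comp q_num
  have q_den : Computable fun z : ℚ × ℕ => z.1.den := computable_rat_den.comp .fst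
  have a_snd : Computable fun z : ℚ × ℕ => a z.2 := ha.comp .snd
  have a_natAbs := primrec_int_natAbs.to_comp.comp (computable_rat_num.comp a_snd)
  have a_den := computable_rat_den.comp a_snd
  exact computablePred_and (computablePred_comp primrecPred_int_nonneg.computablePred q_num)
    (computablePred_and (le_pred q_natAbs q_den) (computablePred_and (le_pred q_den .snd)
      (computablePred_and
        (lt_pred (mul a_natAbs q_den) (mul (add q_natAbs (.const 2)) a_den))
        (lt_pred (mul q_natAbs a_den) (add (mul a_natAbs q_den) (mul (.const 2) a_den))))))

theorem tendsto_ratCast_isGridNeighbor (h : Tendsto (fun s => (a s : ℝ)) atTop (nhds α)) :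
    Tendsto ((↑) : ℚ → ℝ) (cofinite ⊓ 𝓟 {q | IsGridNeighbor a q}) (nhds α) := by
  refine Metric.tendsto_nhds.2 fun ε hε => ?_
  obtain ⟨N, hN⟩ := eventually_atTop.1 (Metric.tendsto_nhds.1 h (ε / 2) (half_pos hε))
  obtain ⟨K, hK⟩ := exists_nat_gt (4 / ε)
  have hcofinite : ∀ᶠ q : ℚ in cofinite, ¬(q ∈ Set.Icc 0 1 ∧ q.den ≤ max N K) :=
    (finite_setOf_rat_mem_Icc_den_le 0 1 (max N K)).compl_mem_cofinite
  rw [eventually_inf_principal]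
  filter_upwards [hcofinite] with q hlarge ⟨hq, t, ht, hdist⟩
  have hden : max N K < q.den := not_le.1 fun hle => hlarge ⟨hq, hle⟩
  have hden_pos : (0 : ℝ) < q.den := mod_cast q.pos
  have hat : dist (q : ℝ) (a t) < 2 / q.den := by
    rw [dist_comm, Real.dist_eq]
    simpa [Rat.cast_abs] using (Rat.cast_lt (K := ℝ)).2 hdist
  have hsmall : 2 / (q.den : ℝ) < ε / 2 := by
    have hKden : (K : ℝ) < q.den := mod_cast (le_max_right N K).trans_lt hden
    have := (div_lt_iff₀ hε).1 (hK.trans hKden)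
    rw [div_lt_div_iff₀ hden_pos two_pos]
    linarith
  calc dist (q : ℝ) α ≤ dist (q : ℝ) (a t) + dist (a t : ℝ) α := dist_triangle _ _ _
    _ < ε / 2 + ε / 2 :=
      add_lt_add (hat.trans hsmall) (hN t (((le_max_left N K).trans hden.le).trans ht))
    _ = ε := add_halves ε

theorem rat_den_natCast_div_natCast_le (m : ℕ) {n : ℕ} (hn : 0 < n) : (m / n : ℚ).den ≤ n := by
  have hdvd : ((m / n : ℚ).den : ℤ) ∣ n := by
    simpa [Rat.divInt_eq_div] using Rat.den_dvd m n
  exact Nat.le_of_dvd hn (Int.natCast_dvd_natCast.1 hdvd)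

theorem abs_natCast_div_sub_le {m n : ℕ} (hn : 0 < n) (hm : |n * α - m| ≤ 1) :
    |(m / n - α : ℝ)| ≤ 1 / n := by
  have hn' : (0 : ℝ) < n := mod_cast hn
  rwa [abs_sub_comm, le_div_iff₀ hn', ← abs_of_pos hn', ← abs_mul, abs_of_pos hn', sub_mul,
    div_mul_cancel₀ _ hn'.ne', mul_comm]

theorem isGridNeighbor_natCast_div (h : Tendsto (fun s => (a s : ℝ)) atTop (nhds α)) {m n : ℕ}
    (hn : 0 < n) (hmn : m ≤ n) (hm : |n * α - m| ≤ 1) : IsGridNeighbor a (m / n) := by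
  set q : ℚ := m / n with hq
  have hden_pos : (0 : ℝ) < q.den := mod_cast q.pos
  have hden_le : (q.den : ℝ) ≤ n := mod_cast rat_den_natCast_div_natCast_le m hn
  have hclose : |α - q| < 2 / q.den := by
    calc |α - q| = |(m / n - α : ℝ)| := by rw [hq, abs_sub_comm]; push_cast; rfl
      _ ≤ 1 / n := abs_natCast_div_sub_le hn hm
      _ ≤ 1 / q.den := one_div_le_one_div_of_le hden_pos hden_le
      _ < 2 / q.den := by gcongr; norm_num
  obtain ⟨t, hlt, ht⟩ :=
    (((h.sub_const (q : ℝ)).abs.eventually_lt_const hclose).and (eventually_ge_atTop q.den)).exists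
  have hmn' : (m : ℚ) ≤ n := mod_cast hmn
  exact ⟨⟨by positivity, div_le_one_of_le₀ hmn' n.cast_nonneg⟩, t, ht,
    (Rat.cast_lt (K := ℝ)).1 (by simpa [Rat.cast_abs] using hlt)⟩

theorem infinite_isGridNeighbor_mem (h : Tendsto (fun s => (a s : ℝ)) atTop (nhds α)) {U : Set ℝ}
    (hα : α ∉ U) (hU : ∀ n : ℕ, 0 < n → ∃ m ≤ n, |n * α - m| ≤ 1 ∧ (m / n : ℝ) ∈ U) :
    {q : ℚ | IsGridNeighbor a q ∧ (q : ℝ) ∈ U}.Infinite := by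
  intro hfin
  choose m hle hm hmem using fun n : ℕ => hU (n + 1) n.succ_pos
  have hlim : Tendsto (fun n : ℕ => (m n / (n + 1 : ℕ) : ℝ)) atTop (nhds α) := by
    rw [tendsto_iff_dist_tendsto_zero]
    refine squeeze_zero (fun _ => dist_nonneg) (fun n => ?_)
      tendsto_one_div_add_atTop_nhds_zero_nat
    exact_mod_cast abs_natCast_div_sub_le n.succ_pos (hm n)
  obtain ⟨q, hq, rfl⟩ := (hfin.image ((↑) : ℚ → ℝ)).isClosed.mem_of_tendsto hlim <|
    .of_forall fun n => ⟨m n / (n + 1 : ℕ),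
      ⟨isGridNeighbor_natCast_div h n.succ_pos (hle n) (hm n), by simpa using hmem n⟩, by simp⟩
  exact hα hq.2

theorem infinite_isGridNeighbor_lt (h : Tendsto (fun s => (a s : ℝ)) atTop (nhds α))
    (hα : α ∈ Set.Ioo 0 1) : {q : ℚ | IsGridNeighbor a q ∧ (q : ℝ) < α}.Infinite := by
  refine infinite_isGridNeighbor_mem h (U := Set.Iio α) (lt_irrefl α) fun n hn => ?_
  have hn' : (0 : ℝ) < n := mod_cast hn
  have hceil_pos : 0 < ⌈n * α⌉₊ := Nat.ceil_pos.2 (mul_pos hn' hα.1)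
  have hceil_le : ⌈n * α⌉₊ ≤ n := Nat.ceil_le.2 (mul_le_of_le_one_right hn'.le hα.2.le)
  have hlt : ((⌈n * α⌉₊ - 1 : ℕ) : ℝ) < n * α := Nat.lt_ceil.1 (Nat.sub_one_lt hceil_pos.ne')
  have hle : n * α ≤ (⌈n * α⌉₊ - 1 : ℕ) + 1 := by
    exact_mod_cast (Nat.le_ceil _).trans_eq (by rw [Nat.sub_add_cancel hceil_pos])
  refine ⟨⌈n * α⌉₊ - 1, (Nat.sub_le _ _).trans hceil_le, abs_le.2 ⟨?_, ?_⟩, ?_⟩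
  · linarith
  · linarith
  · exact (div_lt_iff₀' hn').2 hlt

theorem infinite_isGridNeighbor_gt (h : Tendsto (fun s => (a s : ℝ)) atTop (nhds α))
    (hα : α ∈ Set.Ioo 0 1) : {q : ℚ | IsGridNeighbor a q ∧ α < (q : ℝ)}.Infinite := by
  refine infinite_isGridNeighbor_mem h (U := Set.Ioi α) (lt_irrefl α) fun n hn => ?_
  have hn' : (0 : ℝ) < n := mod_cast hn
  have hpos : 0 < n * α := mul_pos hn' hα.1
  have hfloor_lt : ⌊n * α⌋₊ < n := (Nat.floor_lt hpos.le).2 (mul_lt_of_lt_one_right hn' hα.2)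
  have hle : (⌊n * α⌋₊ : ℝ) ≤ n * α := Nat.floor_le hpos.le
  have hlt : n * α < (⌊n * α⌋₊ + 1 : ℕ) := mod_cast Nat.lt_floor_add_one (n * α)
  refine ⟨⌊n * α⌋₊ + 1, hfloor_lt, abs_le.2 ⟨?_, ?_⟩, ?_⟩
  · push_cast
    linarith
  · linarith
  · exact (lt_div_iff₀' hn').2 hlt

end Approx

theorem frequently_atTop_of_infinite_of_range_eq {β : Type*} {f : ℕ → β} {s : Set β} {P : β → Prop}
    (hf : Set.range f = s) (hinf : {b | b ∈ s ∧ P b}.Infinite) :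
    ∃ᶠ n in atTop, P (f n) := by
  rw [Nat.frequently_atTop_iff_infinite]
  exact (hinf.preimage (fun b hb => hf ▸ hb.1)).mono fun n hn => hn.2

theorem ca_has_two_sided_approx (α : ℝ) (hα : α ∈ Set.Ioo (0 : ℝ) 1)
    (hca : ∃ a : ℕ → ℚ, IsCompApprox a α) :
    ∃ a : ℕ → ℚ, IsCompApprox a α ∧
      (∃ᶠ s in atTop, (a s : ℝ) < α) ∧ (∃ᶠ s in atTop, α < (a s : ℝ)) := by
  obtain ⟨a, ha, hmem, hlim⟩ := hca
  have hlt := infinite_isGridNeighbor_lt hlim hα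
  obtain ⟨b, hb, hinj, hrange⟩ := exists_computable_injective_range
    (rePred_isGridNeighbor ha fun s => (hmem s).1) (hlt.mono fun q hq => hq.1)
  have hgrid (s : ℕ) : IsGridNeighbor a (b s) := hrange.subset ⟨s, rfl⟩
  have hb_tendsto : Tendsto b atTop (cofinite ⊓ 𝓟 {q | IsGridNeighbor a q}) :=
    tendsto_inf.2 ⟨Nat.cofinite_eq_atTop ▸ hinj.tendsto_cofinite,
      tendsto_principal.2 (.of_forall hgrid)⟩
  exact ⟨b, ⟨hb, fun s => (hgrid s).1, (tendsto_ratCast_isGridNeighbor hlim).comp hb_tendsto⟩,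
    frequently_atTop_of_infinite_of_range_eq (P := fun q : ℚ => (q : ℝ) < α) hrange hlt,
    frequently_atTop_of_infinite_of_range_eq (P := fun q : ℚ => α < (q : ℝ)) hrange
      (infinite_isGridNeighbor_gt hlim hα)⟩
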